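/- Let condition B hold and let v_ε, ε ∈ (0, ε₀], be positive numbers with v_ε → ∞ as ε → 0. Then for every i ∈ X the normalized occupation-time processes converge to the identity function uniformly on compact intervals in probability: for every T > 0 and δ > 0, P(sup_{0≤t≤T} |μ_{ε,i}([tv_ε])/(π_{ε,i}v_ε) − t| > δ) → 0 as ε → 0, for any family of initial distributions q̄_ε. -/

import Mathlib

open MeasureTheory Filter Set
open scoped Topology ENNReal

noncomputable section

/-- Condition B: there exists a ring chain of states `c 0, c 1, …, c N = c 0`
containing all states of the phase space, with
`liminf_{ε→0+} p ε (c (k-1)) (c k) > 0` for `k = 1, …, N`. -/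
def CondB {m : ℕ} (p : ℝ → Fin m → Fin m → ℝ) : Prop :=
  ∃ N : ℕ, 0 < N ∧ ∃ c : ℕ → Fin m, c N = c 0 ∧
    (∀ i : Fin m, ∃ k ≤ N, c k = i) ∧
    ∀ k < N, 0 < Filter.liminf (fun ε => p ε (c k) (c (k + 1))) (𝓝[>] (0 : ℝ))

/-- `π` is a stationary distribution of the transition matrix `p`. -/
def IsStationaryDist {m : ℕ} (p : Fin m → Fin m → ℝ) (π : Fin m → ℝ) : Prop :=
  (∀ i, 0 ≤ π i) ∧ (∑ i, π i = 1) ∧ ∀ j, π j = ∑ i, π i * p i j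

/-- The occupation time `μ_{ε,i}(n) = Σ_{k=1}^n 1(η_{ε,k−1} = i)` of state `i`. -/
def occup {m : ℕ} {Ω : Type} (η : ℕ → Ω → Fin m) (i : Fin m) (n : ℕ) (ω : Ω) : ℕ :=
  ∑ k ∈ Finset.range n, if η k ω = i then 1 else 0

/-!
The Poisson equation `g - P g = 1_i - π i` turns the centred occupation time of `i` up to time `n`
into `g (η 0) - g (η n)` plus a martingale. If every state is reached from every other one within
`L` steps with probability at least `b`, a maximum principle bounds the oscillation of `g` by
`D = L / b`, so the martingale has increments at most `2 D` and its second moment is at most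
`4 n D²`. Doob's maximal inequality then controls the deviation uniformly over `k ≤ n` by a bound
of order `n / (δ v)² = O (1 / v)`. Since `b` and `L` can be chosen uniformly in small `ε` under
condition B, this tends to zero whatever the initial distribution.
-/

section StochasticMatrix

open Matrix

variable {X : Type*} [Fintype X] [DecidableEq X] {P : Matrix X X ℝ} {b : ℝ} {L : ℕ}

/-- Quantitative irreducibility: from every state, every state is reached with probability at
least `b` at some time not exceeding `L`. The time may depend on the two states, so
periodic chains are allowed. -/
def ReachesWithin (P : Matrix X X ℝ) (b : ℝ) (L : ℕ) : Prop :=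
  ∀ x y, ∃ r ≤ L, b ≤ (P ^ r) x y

lemma mulVec_apply_le_of_mem_rowStochastic (hP : P ∈ rowStochastic ℝ X) {g : X → ℝ} {C : ℝ}
    (hg : ∀ x, g x ≤ C) (x : X) : (P *ᵥ g) x ≤ C :=
  calc (P *ᵥ g) x = ∑ y, P x y * g y := rfl
    _ ≤ ∑ y, P x y * C :=
      Finset.sum_le_sum fun y _ => mul_le_mul_of_nonneg_left (hg y) (hP.1 x y)
    _ = C := by rw [← Finset.sum_mul, sum_row_of_mem_rowStochastic hP, one_mul]

lemma apply_mul_sub_le_sub_mulVec_apply (hP : P ∈ rowStochastic ℝ X) {g : X → ℝ} {C : ℝ}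
    (hg : ∀ x, g x ≤ C) (x y : X) : P x y * (C - g y) ≤ C - (P *ᵥ g) x :=
  calc P x y * (C - g y) ≤ ∑ z, P x z * (C - g z) :=
        Finset.single_le_sum (f := fun z => P x z * (C - g z))
          (fun z _ => mul_nonneg (hP.1 x z) (sub_nonneg.2 (hg z))) (Finset.mem_univ y)
    _ = C - (P *ᵥ g) x := by
      simp only [mul_sub, Finset.sum_sub_distrib, ← Finset.sum_mul,
        sum_row_of_mem_rowStochastic hP, one_mul, mulVec, dotProduct]

lemma sub_pow_mulVec_apply_le (hP : P ∈ rowStochastic ℝ X) {g : X → ℝ} {B : ℝ}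
    (hg : ∀ x, g x - (P *ᵥ g) x ≤ B) (r : ℕ) (x : X) : g x - (P ^ r *ᵥ g) x ≤ r * B := by
  induction r generalizing x with
  | zero => simp
  | succ r ih =>
    have telescope : g x - (P ^ (r + 1) *ᵥ g) x
        = (g x - (P *ᵥ g) x) + (P *ᵥ (g - P ^ r *ᵥ g)) x := by
      rw [pow_succ', ← mulVec_mulVec, mulVec_sub, Pi.sub_apply]
      ring
    have increment_le : (P *ᵥ (g - P ^ r *ᵥ g)) x ≤ r * B :=
      mulVec_apply_le_of_mem_rowStochastic hP ih x
    rw [telescope]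
    push_cast
    linarith [hg x]

lemma ReachesWithin.sub_le (hR : ReachesWithin P b L) (hP : P ∈ rowStochastic ℝ X) (hb : 0 < b)
    {g : X → ℝ} {B : ℝ} (hB : 0 ≤ B) (hg : ∀ x, g x - (P *ᵥ g) x ≤ B) (x y : X) :
    g x - g y ≤ L * B / b := by
  obtain ⟨z, -, hz⟩ := Finset.exists_max_image Finset.univ g ⟨x, Finset.mem_univ x⟩
  have le_max : ∀ t, g t ≤ g z := fun t => hz t (Finset.mem_univ t)
  obtain ⟨r, hrL, hr⟩ := hR z y
  rw [le_div_iff₀ hb]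
  calc (g x - g y) * b ≤ (g z - g y) * b := by gcongr; exact le_max x
    _ ≤ (P ^ r) z y * (g z - g y) := by
      rw [mul_comm]; exact mul_le_mul_of_nonneg_right hr (sub_nonneg.2 (le_max y))
    _ ≤ g z - (P ^ r *ᵥ g) z := apply_mul_sub_le_sub_mulVec_apply (pow_mem hP r) le_max z y
    _ ≤ r * B := sub_pow_mulVec_apply_le hP hg r z
    _ ≤ L * B := by gcongr

lemma ReachesWithin.abs_sub_le (hR : ReachesWithin P b L) (hP : P ∈ rowStochastic ℝ X)
    (hb : 0 < b) {g : X → ℝ} {B : ℝ} (hB : 0 ≤ B) (hg : ∀ x, g x - (P *ᵥ g) x ≤ B) (x y : X) :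
    |g x - g y| ≤ L * B / b :=
  abs_sub_le_iff.2 ⟨hR.sub_le hP hb hB hg x y, hR.sub_le hP hb hB hg y x⟩

variable {π : X → ℝ}

/-- The matrix `1 - P + 1 πᵀ`, whose inverse is the fundamental matrix of Kemeny and Snell: it
agrees with `1 - P` on vectors of `π`-mean zero but is invertible. -/
def poissonMatrix (P : Matrix X X ℝ) (π : X → ℝ) : Matrix X X ℝ :=
  1 - P + vecMulVec 1 π

lemma poissonMatrix_mulVec (g : X → ℝ) :
    poissonMatrix P π *ᵥ g = g - P *ᵥ g + fun _ => π ⬝ᵥ g := by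
  ext x
  rw [poissonMatrix, add_mulVec, sub_mulVec, one_mulVec, vecMulVec_mulVec]
  simp

lemma dotProduct_poissonMatrix_mulVec (hπ : ∑ x, π x = 1) (hπP : π ᵥ* P = π) (g : X → ℝ) :
    π ⬝ᵥ (poissonMatrix P π *ᵥ g) = π ⬝ᵥ g := by
  have dot_const : π ⬝ᵥ (fun _ => π ⬝ᵥ g) = π ⬝ᵥ g := by
    rw [dotProduct, ← Finset.sum_mul, hπ, one_mul]
  rw [poissonMatrix_mulVec, dotProduct_add, dotProduct_sub, dotProduct_mulVec, hπP, dot_const,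
    sub_self, zero_add]

lemma ReachesWithin.isUnit_poissonMatrix (hR : ReachesWithin P b L) (hP : P ∈ rowStochastic ℝ X)
    (hb : 0 < b) (hπ : ∑ x, π x = 1) (hπP : π ᵥ* P = π) : IsUnit (poissonMatrix P π) := by
  rw [← mulVec_injective_iff_isUnit]
  refine (injective_iff_map_eq_zero (poissonMatrix P π).mulVecLin).2 fun g hg => ?_
  rw [mulVecLin_apply] at hg
  have mean_zero : π ⬝ᵥ g = 0 := by
    rw [← dotProduct_poissonMatrix_mulVec hπ hπP, hg, dotProduct_zero]
  have harmonic : ∀ x, g x - (P *ᵥ g) x = 0 := fun x => by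
    simpa [poissonMatrix_mulVec, mean_zero] using congrFun hg x
  have constant : ∀ x y, g x = g y := fun x y => by
    have := hR.abs_sub_le hP hb le_rfl (fun x => (harmonic x).le) x y
    rw [mul_zero, zero_div, abs_nonpos_iff] at this
    exact sub_eq_zero.1 this
  ext x
  calc g x = ∑ y, π y * g x := by rw [← Finset.sum_mul, hπ, one_mul]
    _ = π ⬝ᵥ g := Finset.sum_congr rfl fun y _ => by rw [constant x y]
    _ = 0 := mean_zero

theorem ReachesWithin.exists_sub_mulVec_eq (hR : ReachesWithin P b L)
    (hP : P ∈ rowStochastic ℝ X) (hb : 0 < b) (hπ : ∑ x, π x = 1) (hπP : π ᵥ* P = π)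
    {f : X → ℝ} (hf : π ⬝ᵥ f = 0) : ∃ g, g - P *ᵥ g = f := by
  obtain ⟨g, hg⟩ := mulVec_surjective_iff_isUnit.2 (hR.isUnit_poissonMatrix hP hb hπ hπP) f
  have mean_zero : π ⬝ᵥ g = 0 := by rw [← dotProduct_poissonMatrix_mulVec hπ hπP, hg, hf]
  refine ⟨g, ?_⟩
  ext x
  simpa [poissonMatrix_mulVec, mean_zero] using congrFun hg x

lemma vecMul_pow_eq_self (hπP : π ᵥ* P = π) (r : ℕ) : π ᵥ* P ^ r = π := by
  induction r with
  | zero => rw [pow_zero, vecMul_one]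
  | succ r ih => rw [pow_succ, ← vecMul_vecMul, ih, hπP]

lemma ReachesWithin.div_card_le (hR : ReachesWithin P b L) (hP : P ∈ rowStochastic ℝ X)
    (hπ : π ∈ stdSimplex ℝ X) (hπP : π ᵥ* P = π) (y : X) : b / Fintype.card X ≤ π y := by
  have mul_le : ∀ x, π x * b ≤ π y := fun x => by
    obtain ⟨r, -, hr⟩ := hR x y
    calc π x * b ≤ π x * (P ^ r) x y := mul_le_mul_of_nonneg_left hr (hπ.1 x)
      _ ≤ (π ᵥ* P ^ r) y :=
        Finset.single_le_sum (f := fun z => π z * (P ^ r) z y)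
          (fun z _ => mul_nonneg (hπ.1 z) ((pow_mem hP r).1 z y)) (Finset.mem_univ x)
      _ = π y := by rw [vecMul_pow_eq_self hπP]
  have : Nonempty X := ⟨y⟩
  rw [div_le_iff₀' (Nat.cast_pos.2 Fintype.card_pos)]
  calc b = ∑ x, π x * b := by rw [← Finset.sum_mul, hπ.2, one_mul]
    _ ≤ ∑ _x : X, π y := Finset.sum_le_sum fun x _ => mul_le x
    _ = Fintype.card X * π y := by simp

end StochasticMatrix

section Martingale

open scoped NNReal

variable {Ω : Type*} {mΩ : MeasurableSpace Ω} {μ : Measure Ω}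

lemma submartingale_sq_of_martingale {ι : Type*} [Preorder ι] {ℱ : Filtration ι mΩ}
    [SigmaFiniteFiltration μ ℱ] {M : ι → Ω → ℝ} (hM : Martingale M ℱ μ)
    (hM₂ : ∀ n, MemLp (M n) 2 μ) : Submartingale (fun n ω => M n ω ^ 2) ℱ μ := by
  refine ⟨fun n => (hM.stronglyAdapted n).pow 2, fun i j hij => ?_, fun n => (hM₂ n).integrable_sq⟩
  filter_upwards [hM.condExp_ae_eq hij,
    (even_two.convexOn_pow (𝕜 := ℝ)).map_condExp_le_univ (ℱ.le i)
      (continuous_pow 2).lowerSemicontinuous (hM.integrable j) (hM₂ j).integrable_sq]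
    with ω martingale_eq jensen
  simpa [Function.comp_def, martingale_eq] using jensen

variable {ℱ : Filtration ℕ mΩ} {M : ℕ → Ω → ℝ} {R : ℝ}

lemma integral_mul_sub_eq_zero_of_martingale [IsFiniteMeasure μ] (hM : Martingale M ℱ μ)
    (hM₂ : ∀ n, MemLp (M n) 2 μ) (n : ℕ) : ∫ ω, M n ω * (M (n + 1) ω - M n ω) ∂μ = 0 := by
  have increment_centered : μ[M (n + 1) - M n | ℱ n] =ᵐ[μ] 0 := by
    filter_upwards [condExp_sub (hM.integrable (n + 1)) (hM.integrable n) (ℱ n),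
      hM.condExp_ae_eq n.le_succ, hM.condExp_ae_eq (le_refl n)] with ω h₁ h₂ h₃
    simp [h₁, h₂, h₃]
  have pull_out := condExp_mul_of_stronglyMeasurable_left (hM.stronglyAdapted n)
    ((hM₂ n).integrable_mul ((hM₂ (n + 1)).sub (hM₂ n)))
    ((hM.integrable (n + 1)).sub (hM.integrable n))
  calc ∫ ω, M n ω * (M (n + 1) ω - M n ω) ∂μ
      = ∫ ω, μ[M n * (M (n + 1) - M n) | ℱ n] ω ∂μ := (integral_condExp (ℱ.le n)).symm
    _ = ∫ _, 0 ∂μ := integral_congr_ae <| by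
      filter_upwards [pull_out, increment_centered] with ω h₁ h₂
      simp [h₁, h₂]
    _ = 0 := integral_zero _ _

lemma integral_sq_succ_of_martingale [IsFiniteMeasure μ] (hM : Martingale M ℱ μ)
    (hM₂ : ∀ n, MemLp (M n) 2 μ) (n : ℕ) :
    ∫ ω, M (n + 1) ω ^ 2 ∂μ = ∫ ω, M n ω ^ 2 ∂μ + ∫ ω, (M (n + 1) ω - M n ω) ^ 2 ∂μ := by
  have hd := (hM₂ (n + 1)).sub (hM₂ n)
  have increment_sq : Integrable (fun ω => (M (n + 1) ω - M n ω) ^ 2) μ := hd.integrable_sq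
  have cross : Integrable (fun ω => 2 * (M n ω * (M (n + 1) ω - M n ω))) μ :=
    ((hM₂ n).integrable_mul hd).const_mul 2
  have sq_add_cross : Integrable
      (fun ω => M n ω ^ 2 + 2 * (M n ω * (M (n + 1) ω - M n ω))) μ :=
    (hM₂ n).integrable_sq.add cross
  calc ∫ ω, M (n + 1) ω ^ 2 ∂μ
      = ∫ ω, M n ω ^ 2 + 2 * (M n ω * (M (n + 1) ω - M n ω)) + (M (n + 1) ω - M n ω) ^ 2 ∂μ := by
        congr with ω; ring
    _ = ∫ ω, M n ω ^ 2 ∂μ + ∫ ω, (M (n + 1) ω - M n ω) ^ 2 ∂μ := by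
        rw [integral_add sq_add_cross increment_sq,
          integral_add (hM₂ n).integrable_sq cross, integral_const_mul,
          integral_mul_sub_eq_zero_of_martingale hM hM₂, mul_zero, add_zero]

lemma integral_sq_le_of_martingale [IsProbabilityMeasure μ] (hM : Martingale M ℱ μ)
    (hM₂ : ∀ n, MemLp (M n) 2 μ) (h₀ : M 0 = 0)
    (hR : ∀ᵐ ω ∂μ, ∀ n, |M (n + 1) ω - M n ω| ≤ R) (n : ℕ) :
    ∫ ω, M n ω ^ 2 ∂μ ≤ n * R ^ 2 := by
  induction n with
  | zero => simp [h₀]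
  | succ n ih =>
    have increment_le : ∫ ω, (M (n + 1) ω - M n ω) ^ 2 ∂μ ≤ R ^ 2 :=
      calc ∫ ω, (M (n + 1) ω - M n ω) ^ 2 ∂μ ≤ ∫ _, R ^ 2 ∂μ :=
            integral_mono_ae ((hM₂ (n + 1)).sub (hM₂ n)).integrable_sq (integrable_const _) <| by
              filter_upwards [hR] with ω hω
              exact sq_le_sq' (abs_le.1 (hω n)).1 (abs_le.1 (hω n)).2
        _ = R ^ 2 := by simp
    rw [integral_sq_succ_of_martingale hM hM₂]
    push_cast
    linarith

lemma memLp_of_abs_increment_le [IsFiniteMeasure μ] (hM : ∀ n, AEStronglyMeasurable (M n) μ)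
    (h₀ : M 0 = 0) (hR : ∀ᵐ ω ∂μ, ∀ n, |M (n + 1) ω - M n ω| ≤ R) (p : ℝ≥0∞) (n : ℕ) :
    MemLp (M n) p μ := by
  refine MemLp.of_bound (hM n) (n * R) ?_
  filter_upwards [hR] with ω hω
  calc ‖M n ω‖ = |∑ k ∈ Finset.range n, (M (k + 1) ω - M k ω)| := by
        rw [Finset.sum_range_sub (M · ω), h₀, Pi.zero_apply, sub_zero, Real.norm_eq_abs]
    _ ≤ ∑ k ∈ Finset.range n, |M (k + 1) ω - M k ω| := Finset.abs_sum_le_sum_abs _ _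
    _ ≤ ∑ _k ∈ Finset.range n, R := Finset.sum_le_sum fun k _ => hω k
    _ = n * R := by simp

theorem sq_mul_measureReal_le_integral_sq_of_martingale [IsFiniteMeasure μ]
    (hM : Martingale M ℱ μ) (hM₂ : ∀ n, MemLp (M n) 2 μ) {a : ℝ} (ha : 0 ≤ a) (n : ℕ) :
    a ^ 2 * μ.real {ω | ∃ k ≤ n, a ≤ |M k ω|} ≤ ∫ ω, M n ω ^ 2 ∂μ := by
  lift a to ℝ≥0 using ha
  have event_eq : {ω | ∃ k ≤ n, a ≤ |M k ω|} = {ω | ((a ^ 2 : ℝ≥0) : ℝ) ≤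
      (Finset.range (n + 1)).sup' Finset.nonempty_range_add_one fun k => M k ω ^ 2} := by
    ext ω
    simp [Finset.le_sup'_iff, sq_le_sq]
  have doob := maximal_ineq (submartingale_sq_of_martingale hM hM₂)
    (fun _ _ => sq_nonneg _) (ε := a ^ 2) n
  rw [← event_eq] at doob
  have := ENNReal.toReal_mono ENNReal.ofReal_ne_top doob
  rw [ENNReal.toReal_mul, ENNReal.toReal_ofReal (integral_nonneg fun _ => sq_nonneg _)] at this
  exact this.trans (setIntegral_le_integral (hM₂ n).integrable_sq
    (ae_of_all _ fun _ => sq_nonneg _))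

end Martingale

section MarkovChain

open Matrix

variable {Ω X : Type*} {mΩ : MeasurableSpace Ω} {μ : Measure Ω} {ℱ : Filtration ℕ mΩ}
  {η : ℕ → Ω → X}

/-- The martingale part of the process `g (η n)` in its Doob decomposition, shifted to start at
zero. For a Markov chain it compares `g (η n) - g (η 0)` with an additive functional of the
chain. -/
def centeredMartingalePart (ℱ : Filtration ℕ mΩ) (μ : Measure Ω) (η : ℕ → Ω → X) (g : X → ℝ)
    (n : ℕ) : Ω → ℝ :=
  martingalePart (fun k ω => g (η k ω)) ℱ μ n - martingalePart (fun k ω => g (η k ω)) ℱ μ 0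

lemma abs_centeredMartingalePart_succ_sub_le {g : X → ℝ} {D : ℝ} (hg : ∀ x y, |g x - g y| ≤ D) :
    ∀ᵐ ω ∂μ, ∀ n, |centeredMartingalePart ℱ μ η g (n + 1) ω - centeredMartingalePart ℱ μ η g n ω|
      ≤ 2 * D := by
  have increment_le : ∀ᵐ ω ∂μ, ∀ n, ‖g (η (n + 1) ω) - g (η n ω)‖ ≤ D :=
    ae_of_all _ fun _ _ => hg _ _
  simpa [centeredMartingalePart] using
    martingalePart_bdd_difference (f := fun n ω => g (η n ω)) ℱ increment_le

variable [Fintype X] [MeasurableSpace X] {P : Matrix X X ℝ}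

/-- The process `η` is, under `μ`, a homogeneous Markov chain with transition matrix `P` relative
to the filtration `ℱ`. The Markov property is stated on functions, where `P *ᵥ g` is the mean of
`g` after one step. -/
structure IsMarkovChain (ℱ : Filtration ℕ mΩ) (μ : Measure Ω) (P : Matrix X X ℝ)
    (η : ℕ → Ω → X) : Prop where
  adapted : Adapted ℱ η
  condExp_comp_succ : ∀ n (g : X → ℝ),
    μ[fun ω => g (η (n + 1) ω) | ℱ n] =ᵐ[μ] fun ω => (P *ᵥ g) (η n ω)

variable [DiscreteMeasurableSpace X]

lemma IsMarkovChain.stronglyAdapted_comp (hη : IsMarkovChain ℱ μ P η) (g : X → ℝ) :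
    StronglyAdapted ℱ fun n ω => g (η n ω) := fun n =>
  ((Measurable.of_discrete (f := g)).comp (hη.adapted n)).stronglyMeasurable

lemma IsMarkovChain.integrable_comp [IsFiniteMeasure μ] (hη : IsMarkovChain ℱ μ P η)
    (g : X → ℝ) (n : ℕ) : Integrable (fun ω => g (η n ω)) μ :=
  (Integrable.of_finite (f := g)).comp_measurable ((hη.adapted n).mono (ℱ.le n) le_rfl)

lemma IsMarkovChain.centeredMartingalePart_ae_eq [IsFiniteMeasure μ]
    (hη : IsMarkovChain ℱ μ P η) (g : X → ℝ) : ∀ᵐ ω ∂μ, ∀ n, centeredMartingalePart ℱ μ η g n ω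
      = g (η n ω) - g (η 0 ω) + ∑ k ∈ Finset.range n, (g - P *ᵥ g) (η k ω) := by
  have condExp_increment : ∀ᵐ ω ∂μ, ∀ k,
      μ[(fun ω => g (η (k + 1) ω)) - (fun ω => g (η k ω)) | ℱ k] ω
        = -(g - P *ᵥ g) (η k ω) := by
    refine ae_all_iff.2 fun k => ?_
    filter_upwards [condExp_sub (hη.integrable_comp g (k + 1)) (hη.integrable_comp g k) (ℱ k),
      hη.condExp_comp_succ k g] with ω sub_eq succ_eq
    rw [sub_eq, Pi.sub_apply, succ_eq, condExp_of_stronglyMeasurable (ℱ.le k)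
      (hη.stronglyAdapted_comp g k) (hη.integrable_comp g k), Pi.sub_apply, neg_sub]
  filter_upwards [condExp_increment] with ω hω n
  rw [centeredMartingalePart, Pi.sub_apply, martingalePart_zero]
  simp only [martingalePart, predictablePart, Pi.sub_apply, Finset.sum_apply, hω,
    Finset.sum_neg_distrib]
  ring

lemma IsMarkovChain.martingale_centeredMartingalePart [IsFiniteMeasure μ]
    (hη : IsMarkovChain ℱ μ P η) (g : X → ℝ) :
    Martingale (centeredMartingalePart ℱ μ η g) ℱ μ := by
  have := martingale_martingalePart (hη.stronglyAdapted_comp g) (hη.integrable_comp g)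
  exact this.sub (martingale_const_fun ℱ μ (this.stronglyAdapted 0) (this.integrable 0))

theorem IsMarkovChain.measureReal_le_abs_sum_le [IsProbabilityMeasure μ]
    (hη : IsMarkovChain ℱ μ P η) {g : X → ℝ} {D : ℝ} (hg : ∀ x y, |g x - g y| ≤ D)
    {s : ℝ} (hs : D < s) (n : ℕ) :
    μ.real {ω | ∃ k ≤ n, s ≤ |∑ j ∈ Finset.range k, (g - P *ᵥ g) (η j ω)|}
      ≤ n * (2 * D) ^ 2 / (s - D) ^ 2 := by
  set M := centeredMartingalePart ℱ μ η g
  have hM : Martingale M ℱ μ := hη.martingale_centeredMartingalePart g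
  have M_zero : M 0 = 0 := sub_self _
  have increment_le := abs_centeredMartingalePart_succ_sub_le (ℱ := ℱ) (μ := μ) (η := η) hg
  have hM₂ := memLp_of_abs_increment_le (fun n => (hM.integrable n).1) M_zero increment_le 2
  have subset : {ω | ∃ k ≤ n, s ≤ |∑ j ∈ Finset.range k, (g - P *ᵥ g) (η j ω)|}
      ≤ᵐ[μ] {ω | ∃ k ≤ n, s - D ≤ |M k ω|} := by
    filter_upwards [hη.centeredMartingalePart_ae_eq g] with ω hω
    rintro ⟨k, hkn, hk⟩
    have sum_eq : ∑ j ∈ Finset.range k, (g - P *ᵥ g) (η j ω) = M k ω - (g (η k ω) - g (η 0 ω)) :=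
      eq_sub_of_add_eq' (hω k).symm
    rw [sum_eq] at hk
    exact ⟨k, hkn, by linarith [abs_sub (M k ω) (g (η k ω) - g (η 0 ω)), hg (η k ω) (η 0 ω)]⟩
  have hsD : 0 < s - D := sub_pos.2 hs
  rw [le_div_iff₀' (by positivity)]
  calc (s - D) ^ 2 * μ.real {ω | ∃ k ≤ n, s ≤ |∑ j ∈ Finset.range k, (g - P *ᵥ g) (η j ω)|}
      ≤ (s - D) ^ 2 * μ.real {ω | ∃ k ≤ n, s - D ≤ |M k ω|} :=
        mul_le_mul_of_nonneg_left (ENNReal.toReal_mono (measure_ne_top _ _)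
          (measure_mono_ae subset)) (sq_nonneg _)
    _ ≤ ∫ ω, M n ω ^ 2 ∂μ := sq_mul_measureReal_le_integral_sq_of_martingale hM hM₂ hsD.le n
    _ ≤ n * (2 * D) ^ 2 := integral_sq_le_of_martingale hM hM₂ M_zero increment_le n

theorem IsMarkovChain.measureReal_le_abs_sum_sub_le [DecidableEq X] [IsProbabilityMeasure μ]
    (hη : IsMarkovChain ℱ μ P η) (hP : P ∈ rowStochastic ℝ X) {b : ℝ} {L : ℕ}
    (hR : ReachesWithin P b L) (hb : 0 < b) {π : X → ℝ} (hπ : ∑ x, π x = 1) (hπP : π ᵥ* P = π)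
    {f : X → ℝ} {B : ℝ} (hB : 0 ≤ B) (hf : ∀ x, f x - π ⬝ᵥ f ≤ B) {s : ℝ} (hs : L * B / b < s)
    (n : ℕ) :
    μ.real {ω | ∃ k ≤ n, s ≤ |∑ j ∈ Finset.range k, f (η j ω) - k * (π ⬝ᵥ f)|}
      ≤ n * (2 * (L * B / b)) ^ 2 / (s - L * B / b) ^ 2 := by
  have mean_zero : π ⬝ᵥ (fun x => f x - π ⬝ᵥ f) = 0 := by
    simp only [dotProduct, mul_sub, Finset.sum_sub_distrib, ← Finset.sum_mul, hπ, one_mul, sub_self]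
  obtain ⟨g, hg⟩ := hR.exists_sub_mulVec_eq hP hb hπ hπP mean_zero
  have osc_le : ∀ x y, |g x - g y| ≤ L * B / b :=
    hR.abs_sub_le hP hb hB fun x => (congrFun hg x).trans_le (hf x)
  simpa only [hg, Finset.sum_sub_distrib, Finset.sum_const, Finset.card_range, nsmul_eq_mul] using
    hη.measureReal_le_abs_sum_le osc_le hs n

end MarkovChain

section PathLaw

open Matrix

variable {Ω X : Type*} {n : ℕ} {η : ℕ → Ω → X} {I J : ℕ → X} {P : Matrix X X ℝ}

/-- The cylinder event that the process `η` follows the path `I` up to time `n`. -/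
def pathEvent (η : ℕ → Ω → X) (n : ℕ) (I : ℕ → X) : Set Ω := {ω | ∀ k ≤ n, η k ω = I k}

/-- The product of the transition probabilities along the first `n` steps of the path `I`; it is
the probability of `pathEvent η n I` for the chain started at `I 0`. -/
def pathWeight (P : Matrix X X ℝ) (n : ℕ) (I : ℕ → X) : ℝ :=
  ∏ k ∈ Finset.Icc 1 n, P (I (k - 1)) (I k)

lemma pathEvent_anti (η : ℕ → Ω → X) (I : ℕ → X) : Antitone fun n => pathEvent η n I :=
  fun _ _ hmn _ hω k hk => hω k (hk.trans hmn)

lemma pathEvent_congr (h : ∀ k ≤ n, I k = J k) : pathEvent η n I = pathEvent η n J :=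
  Set.ext fun _ => forall₂_congr fun k hk => by rw [h k hk]

lemma pathEvent_succ : pathEvent η (n + 1) I = pathEvent η n I ∩ η (n + 1) ⁻¹' {I (n + 1)} := by
  ext ω
  simp [pathEvent, Nat.le_succ_iff, or_imp, forall_and]

lemma pathWeight_succ : pathWeight P (n + 1) I = pathWeight P n I * P (I n) (I (n + 1)) :=
  Finset.prod_Icc_succ_top (by omega) _

lemma pathWeight_congr (h : ∀ k ≤ n, I k = J k) : pathWeight P n I = pathWeight P n J :=
  Finset.prod_congr rfl fun k hk => by
    rw [h k (Finset.mem_Icc.1 hk).2, h (k - 1) (by have := (Finset.mem_Icc.1 hk).2; omega)]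

lemma pathWeight_nonneg (hP : ∀ x y, 0 ≤ P x y) (n : ℕ) (I : ℕ → X) : 0 ≤ pathWeight P n I :=
  Finset.prod_nonneg fun _ _ => hP _ _

lemma pathEvent_succ_update (y : X) :
    pathEvent η (n + 1) (Function.update I (n + 1) y) = pathEvent η n I ∩ η (n + 1) ⁻¹' {y} := by
  rw [pathEvent_succ, Function.update_self,
    pathEvent_congr fun k hk => Function.update_of_ne (by omega) y I]

lemma pathWeight_succ_update (y : X) :
    pathWeight P (n + 1) (Function.update I (n + 1) y) = pathWeight P n I * P (I n) y := by
  rw [pathWeight_succ, Function.update_self, Function.update_of_ne (by omega),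
    pathWeight_congr fun k hk => Function.update_of_ne (by omega) y I]

lemma measurableSet_pathEvent [MeasurableSpace Ω] [MeasurableSpace X] [MeasurableSingletonClass X]
    (hη : ∀ n, Measurable (η n)) (n : ℕ) (I : ℕ → X) : MeasurableSet (pathEvent η n I) := by
  simp only [pathEvent, Set.ofPred_forall]
  exact .iInter fun k => .iInter fun _ => hη k (measurableSet_singleton _)

variable {mΩ : MeasurableSpace Ω} {μ : Measure Ω}

lemma setIntegral_preimage_eq_of_fibers {Y : Type*} [Finite Y] [MeasurableSpace Y]
    [MeasurableSingletonClass Y] {φ : Ω → Y} (hφ : Measurable φ) {f g : Ω → ℝ}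
    (hf : Integrable f μ) (hg : Integrable g μ)
    (h : ∀ y, ∫ ω in φ ⁻¹' {y}, f ω ∂μ = ∫ ω in φ ⁻¹' {y}, g ω ∂μ) (S : Set Y) :
    ∫ ω in φ ⁻¹' S, f ω ∂μ = ∫ ω in φ ⁻¹' S, g ω ∂μ := by
  have preimage_eq : φ ⁻¹' S = ⋃ y ∈ S.toFinite.toFinset, φ ⁻¹' {y} := by
    ext; simp
  have meas : ∀ y ∈ S.toFinite.toFinset, MeasurableSet (φ ⁻¹' {y}) :=
    fun y _ => hφ (measurableSet_singleton y)
  have disj := (pairwise_disjoint_fiber φ).set_pairwise (S.toFinite.toFinset : Set Y)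
  rw [preimage_eq, integral_biUnion_finset _ meas disj fun _ _ => hf.integrableOn,
    integral_biUnion_finset _ meas disj fun _ _ => hg.integrableOn]
  exact Finset.sum_congr rfl fun y _ => h y

/-- The elementary Markov property: given the path followed up to time `n`, the next state is
distributed according to the row of `P` at the current state. -/
def HasTransitionMatrix (μ : Measure Ω) (P : Matrix X X ℝ) (η : ℕ → Ω → X) : Prop :=
  ∀ n I y, μ (pathEvent η n I ∩ η (n + 1) ⁻¹' {y})
    = μ (pathEvent η n I) * ENNReal.ofReal (P (I n) y)

variable [Fintype X] [MeasurableSpace X]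

lemma setIntegral_comp_eq_sum [MeasurableSingletonClass X] [IsFiniteMeasure μ] {φ : Ω → X}
    (hφ : Measurable φ) (A : Set Ω) (g : X → ℝ) :
    ∫ ω in A, g (φ ω) ∂μ = ∑ y, μ.real (A ∩ φ ⁻¹' {y}) * g y := by
  rw [← integral_map hφ.aemeasurable .of_discrete, integral_fintype .of_finite]
  refine Finset.sum_congr rfl fun y _ => ?_
  rw [map_measureReal_apply hφ (measurableSet_singleton y),
    measureReal_restrict_apply (hφ (measurableSet_singleton y)), Set.inter_comm, smul_eq_mul]

lemma HasTransitionMatrix.setIntegral_pathEvent [MeasurableSingletonClass X] [IsFiniteMeasure μ]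
    (h : HasTransitionMatrix μ P η) (hη : ∀ n, Measurable (η n)) (hP : ∀ x y, 0 ≤ P x y)
    (n : ℕ) (I : ℕ → X) (g : X → ℝ) :
    ∫ ω in pathEvent η n I, (P *ᵥ g) (η n ω) ∂μ = ∫ ω in pathEvent η n I, g (η (n + 1) ω) ∂μ :=
  calc ∫ ω in pathEvent η n I, (P *ᵥ g) (η n ω) ∂μ
      = ∫ _ in pathEvent η n I, (P *ᵥ g) (I n) ∂μ :=
        setIntegral_congr_fun (measurableSet_pathEvent hη n I) fun ω hω => by
          simp only [hω n le_rfl]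
    _ = ∑ y, μ.real (pathEvent η n I) * P (I n) y * g y := by
        simp only [setIntegral_const, smul_eq_mul, mulVec, dotProduct, Finset.mul_sum, mul_assoc]
    _ = ∑ y, μ.real (pathEvent η n I ∩ η (n + 1) ⁻¹' {y}) * g y := by
        simp only [measureReal_def, h n I, ENNReal.toReal_mul, ENNReal.toReal_ofReal (hP _ _)]
    _ = ∫ ω in pathEvent η n I, g (η (n + 1) ω) ∂μ :=
        (setIntegral_comp_eq_sum (hη (n + 1)) _ g).symm

variable [TopologicalSpace X] [TopologicalSpace.MetrizableSpace X] [BorelSpace X]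
  [DiscreteMeasurableSpace X]

theorem HasTransitionMatrix.isMarkovChain_natural [IsFiniteMeasure μ]
    (h : HasTransitionMatrix μ P η) (hη : ∀ n, Measurable (η n)) (hP : ∀ x y, 0 ≤ P x y) :
    IsMarkovChain (Filtration.natural η fun n => (hη n).stronglyMeasurable) μ P η := by
  set ℱ := Filtration.natural η fun n => (hη n).stronglyMeasurable
  have adapted : Adapted ℱ η := fun n =>
    (Filtration.stronglyAdapted_natural (fun n => (hη n).stronglyMeasurable) n).measurable
  have integrable_comp : ∀ n (g : X → ℝ), Integrable (fun ω => g (η n ω)) μ := fun n g =>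
    Integrable.of_finite.comp_measurable (hη n)
  refine ⟨adapted, fun n g => ?_⟩
  let path : Ω → Set.Iic n → X := fun ω k => η k ω
  have fiber_eq : ∀ z, path ⁻¹' {z} = pathEvent η n fun k => z ⟨min k n, min_le_right k n⟩ := by
    refine fun z => Set.ext fun ω => ⟨?_, fun hω => funext fun k => ?_⟩
    · rintro rfl k hk
      simp [path, min_eq_left hk]
    · simpa [min_eq_left k.2.out] using hω k k.2
  refine (ae_eq_condExp_of_forall_setIntegral_eq (ℱ.le n) (integrable_comp (n + 1) g)
    (fun s _ _ => (integrable_comp n _).integrableOn) (fun s hs _ => ?_)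
    (((Measurable.of_discrete (f := P *ᵥ g)).comp
      (adapted n)).stronglyMeasurable.aestronglyMeasurable)).symm
  rw [Filtration.natural_eq_comap] at hs
  obtain ⟨S, -, rfl⟩ := MeasurableSpace.measurableSet_comap.1 hs
  exact setIntegral_preimage_eq_of_fibers (φ := path) (measurable_pi_lambda _ fun k => hη k)
    (integrable_comp n _) (integrable_comp (n + 1) g)
    (fun z => fiber_eq z ▸ h.setIntegral_pathEvent hη hP n _ g) S

end PathLaw

section MarkovFamily

open Matrix

variable {Ω X : Type*} {mΩ : MeasurableSpace Ω} {η : ℕ → Ω → X} {P : Matrix X X ℝ}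
  {law : X → Measure Ω}

/-- The measures `law x` are the laws of a Markov chain with transition matrix `P` started at `x`,
expressed through the probabilities of finite paths. -/
def IsMarkovFamily (law : X → Measure Ω) (P : Matrix X X ℝ) (η : ℕ → Ω → X) : Prop :=
  ∀ n I, law (I 0) (pathEvent η n I) = ENNReal.ofReal (pathWeight P n I)

lemma exists_pathWeight_neg {x y z : X} (hxy : P x y < 0)
    (hyz : Relation.ReflTransGen (fun a b => 0 < P a b) y z) :
    ∃ n I, I 0 = x ∧ I 1 = y ∧ I (n + 1) = z ∧ pathWeight P (n + 1) I < 0 := by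
  induction hyz with
  | refl =>
    exact ⟨0, fun k => if k = 0 then x else y, by simp, by simp, by simp, by simpa [pathWeight]⟩
  | @tail w z _ hwz ih =>
    obtain ⟨n, I, hI₀, hI₁, hIn, hI⟩ := ih
    refine ⟨n + 1, Function.update I (n + 2) z, by simpa, by simpa, by simp, ?_⟩
    rw [pathWeight_succ_update, hIn]
    exact mul_neg_of_neg_of_pos hI hwz

lemma IsMarkovFamily.nonneg (h : IsMarkovFamily law P η)
    (hP : ∀ x y, Relation.ReflTransGen (fun a b => 0 < P a b) x y) (x y : X) : 0 ≤ P x y := by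
  -- Returning from `y` to `x` along positive transitions and then stepping to `y` again would give
  -- a path of positive weight inside the null event `η 0 = x, η 1 = y`.
  by_contra! hneg
  obtain ⟨n, I, hI₀, hI₁, hIn, hI⟩ := exists_pathWeight_neg hneg (hP y x)
  have weight_pos : 0 < pathWeight P (n + 2) (Function.update I (n + 2) y) := by
    rw [pathWeight_succ_update, hIn]
    exact mul_pos_of_neg_of_neg hI hneg
  have null : law x (pathEvent η 1 I) = 0 := by
    rw [← hI₀, h, ENNReal.ofReal_eq_zero]
    simpa [pathWeight, hI₀, hI₁] using hneg.le
  have event_pos : 0 < law x (pathEvent η (n + 2) (Function.update I (n + 2) y)) := by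
    have := h (n + 2) (Function.update I (n + 2) y)
    rw [Function.update_of_ne (by omega), hI₀] at this
    rwa [this, ENNReal.ofReal_pos]
  refine event_pos.not_ge (null ▸ measure_mono ?_)
  rw [pathEvent_succ_update]
  exact Set.inter_subset_left.trans (pathEvent_anti η I (by omega))

lemma IsMarkovFamily.measure_start (h : IsMarkovFamily law P η) (x : X) :
    law x (pathEvent η 0 fun _ => x) = 1 := by
  simpa [pathWeight] using h 0 fun _ => x

lemma HasTransitionMatrix.sum_smul [Fintype X] (h : ∀ x, HasTransitionMatrix (law x) P η)
    (c : X → ℝ≥0∞) : HasTransitionMatrix (∑ x, c x • law x) P η := fun n I y => by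
  simp only [Measure.coe_finsetSum, Finset.sum_apply, Measure.smul_apply, smul_eq_mul, h _ n I y,
    Finset.sum_mul, mul_assoc]

lemma isProbabilityMeasure_sum_ofReal_smul [Fintype X] [∀ x, IsProbabilityMeasure (law x)]
    {q : X → ℝ} (hq : q ∈ stdSimplex ℝ X) :
    IsProbabilityMeasure (∑ x, ENNReal.ofReal (q x) • law x) := by
  constructor
  simp only [Measure.coe_finsetSum, Finset.sum_apply, Measure.smul_apply, smul_eq_mul,
    measure_univ, mul_one]
  rw [← ENNReal.ofReal_sum_of_nonneg fun x _ => hq.1 x, hq.2, ENNReal.ofReal_one]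

variable [MeasurableSpace X] [MeasurableSingletonClass X] [∀ x, IsProbabilityMeasure (law x)]

lemma IsMarkovFamily.hasTransitionMatrix (h : IsMarkovFamily law P η)
    (hη : ∀ n, Measurable (η n)) (hP : ∀ x y, 0 ≤ P x y) (x : X) :
    HasTransitionMatrix (law x) P η := by
  intro n I y
  by_cases hx : I 0 = x
  · have := h (n + 1) (Function.update I (n + 1) y)
    rw [pathEvent_succ_update, pathWeight_succ_update, Function.update_of_ne (by omega),
      ENNReal.ofReal_mul (pathWeight_nonneg hP n I), ← h] at this
    rwa [← hx]
  · have null : law x (pathEvent η n I) = 0 := by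
      have subset : pathEvent η n I ⊆ (pathEvent η 0 fun _ => x)ᶜ := fun ω hω hω' =>
        hx ((hω 0 n.zero_le).symm.trans (hω' 0 le_rfl))
      exact measure_mono_null subset
        ((prob_compl_eq_zero_iff (measurableSet_pathEvent hη 0 _)).2 (h.measure_start x))
    rw [measure_inter_null_of_null_left _ null, null, zero_mul]

lemma IsMarkovFamily.mem_rowStochastic [Fintype X] [DecidableEq X] (h : IsMarkovFamily law P η)
    (hη : ∀ n, Measurable (η n)) (hP : ∀ x y, 0 ≤ P x y) : P ∈ rowStochastic ℝ X := by
  refine mem_rowStochastic_iff_sum.2 ⟨hP, fun x => ?_⟩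
  have start : (law x).real (pathEvent η 0 fun _ => x) = 1 := by
    rw [measureReal_def, h.measure_start, ENNReal.toReal_one]
  have transition : ∀ y, (law x).real ((pathEvent η 0 fun _ => x) ∩ η 1 ⁻¹' {y})
      = P x y := fun y => by
    rw [measureReal_def, h.hasTransitionMatrix hη hP x 0 _ y, h.measure_start, one_mul,
      ENNReal.toReal_ofReal (hP x y)]
  simpa [start, transition] using
    (setIntegral_comp_eq_sum (hη 1) (pathEvent η 0 fun _ => x) 1 (μ := law x)).symm

variable [Fintype X] [TopologicalSpace X] [TopologicalSpace.MetrizableSpace X] [BorelSpace X]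
  [DiscreteMeasurableSpace X]

theorem IsMarkovFamily.isMarkovChain_sum_ofReal_smul (h : IsMarkovFamily law P η)
    (hη : ∀ n, Measurable (η n)) (hP : ∀ x y, 0 ≤ P x y) {q : X → ℝ} (hq : q ∈ stdSimplex ℝ X) :
    IsMarkovChain (Filtration.natural η fun n => (hη n).stronglyMeasurable)
      (∑ x, ENNReal.ofReal (q x) • law x) P η :=
  have := isProbabilityMeasure_sum_ofReal_smul (law := law) hq
  (HasTransitionMatrix.sum_smul (h.hasTransitionMatrix hη hP) _).isMarkovChain_natural hη hP

end MarkovFamily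

section AsymptoticConnectivity

open Matrix

variable {ι X : Type*} {l : Filter ι} {p q : ι → Matrix X X ℝ} {x y z : X}

/-- Along `l`, the transition probability `p e x y` is bounded away from zero. -/
def AsymptoticallyPos (l : Filter ι) (p : ι → Matrix X X ℝ) (x y : X) : Prop :=
  ∃ a > 0, ∀ᶠ e in l, a ≤ p e x y

lemma exists_pos_eventually_le_of_liminf_pos {u : ι → ℝ} (h : 0 < liminf u l) :
    ∃ a > 0, ∀ᶠ e in l, a ≤ u e := by
  rw [liminf_eq] at h
  have nonempty : {a | ∀ᶠ e in l, a ≤ u e}.Nonempty := by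
    -- The real supremum has the junk value `sSup ∅ = 0`, which would contradict `h`.
    by_contra! hempty
    simp [hempty] at h
  obtain ⟨a, ha, ha₀⟩ := exists_lt_of_lt_csSup nonempty h
  exact ⟨a, ha₀, ha⟩

lemma reflTransGen_of_ring {r : X → X → Prop} {N : ℕ} {c : ℕ → X} (hN : c N = c 0)
    (hc : ∀ x, ∃ k ≤ N, c k = x) (hr : ∀ k < N, r (c k) (c (k + 1))) (x y : X) :
    Relation.ReflTransGen r x y := by
  have forward : ∀ j k, j ≤ k → k ≤ N → Relation.ReflTransGen r (c j) (c k) := by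
    intro j k hjk hkN
    induction k, hjk using Nat.le_induction with
    | base => exact .refl
    | succ k _ ih => exact (ih (by omega)).tail (hr k (by omega))
  obtain ⟨j, hj, rfl⟩ := hc x
  obtain ⟨k, hk, rfl⟩ := hc y
  exact (hN ▸ forward j N hj le_rfl).trans (forward 0 k k.zero_le hk)

lemma CondB.reflTransGen_asymptoticallyPos {m : ℕ} {p : ℝ → Fin m → Fin m → ℝ} (h : CondB p)
    (x y : Fin m) : Relation.ReflTransGen (AsymptoticallyPos (𝓝[>] 0) p) x y := by
  obtain ⟨N, -, c, hN, hc, hp⟩ := h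
  exact reflTransGen_of_ring hN hc
    (fun k hk => exists_pos_eventually_le_of_liminf_pos (hp k hk)) x y

lemma eventually_reflTransGen_pos [Finite X]
    (h : ∀ x y, Relation.ReflTransGen (AsymptoticallyPos l p) x y) :
    ∀ᶠ e in l, ∀ x y, Relation.ReflTransGen (fun a b => 0 < p e a b) x y := by
  have pos : ∀ᶠ e in l, ∀ x y, AsymptoticallyPos l p x y → 0 < p e x y := by
    refine eventually_all.2 fun x => eventually_all.2 fun y => ?_
    by_cases hxy : AsymptoticallyPos l p x y
    · obtain ⟨a, ha, hle⟩ := hxy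
      exact hle.mono fun e he _ => ha.trans_le he
    · exact .of_forall fun e h => absurd h hxy
  exact pos.mono fun e he x y => Relation.ReflTransGen.mono he x y (h x y)

variable [Fintype X] [DecidableEq X]

lemma AsymptoticallyPos.mul (hp : ∀ᶠ e in l, p e ∈ rowStochastic ℝ X)
    (hq : ∀ᶠ e in l, q e ∈ rowStochastic ℝ X) (hxy : AsymptoticallyPos l p x y)
    (hyz : AsymptoticallyPos l q y z) : AsymptoticallyPos l (fun e => p e * q e) x z := by
  obtain ⟨a, ha, hpa⟩ := hxy
  obtain ⟨b, hb, hqb⟩ := hyz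
  refine ⟨a * b, mul_pos ha hb, ?_⟩
  filter_upwards [hp, hq, hpa, hqb] with e hp hq hpa hqb
  calc a * b ≤ p e x y * q e y z := mul_le_mul hpa hqb hb.le (hp.1 x y)
    _ ≤ (p e * q e) x z :=
      Finset.single_le_sum (f := fun w => p e x w * q e w z)
        (fun w _ => mul_nonneg (hp.1 x w) (hq.1 w z)) (Finset.mem_univ y)

lemma exists_pow_asymptoticallyPos (hp : ∀ᶠ e in l, p e ∈ rowStochastic ℝ X)
    (hxy : Relation.ReflTransGen (AsymptoticallyPos l p) x y) :
    ∃ r : ℕ, AsymptoticallyPos l (fun e => p e ^ r) x y := by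
  induction hxy with
  | refl => exact ⟨0, 1, one_pos, .of_forall fun e => by simp⟩
  | tail _ hyz ih =>
    obtain ⟨r, hr⟩ := ih
    exact ⟨r + 1, by simpa only [pow_succ] using hr.mul (hp.mono fun e he => pow_mem he r) hp hyz⟩

theorem exists_eventually_reachesWithin (hp : ∀ᶠ e in l, p e ∈ rowStochastic ℝ X)
    (h : ∀ x y, Relation.ReflTransGen (AsymptoticallyPos l p) x y) :
    ∃ b > 0, ∃ L, ∀ᶠ e in l, ReachesWithin (p e) b L := by
  choose r a ha hle using fun x y => exists_pow_asymptoticallyPos hp (h x y)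
  obtain ⟨⟨b, hb⟩, hba⟩ := Finite.exists_ge fun z : X × X => (⟨a z.1 z.2, ha z.1 z.2⟩ : Ioi (0 : ℝ))
  obtain ⟨L, hL⟩ := Finite.exists_le fun z : X × X => r z.1 z.2
  refine ⟨b, hb, L, ?_⟩
  filter_upwards [eventually_all.2 fun x => eventually_all.2 (hle x)] with e he x y
  exact ⟨r x y, hL (x, y), le_trans (hba (x, y)) (he x y)⟩

end AsymptoticConnectivity

section OccupationTime

open Matrix

lemma tendsto_mul_div_sq_sub_atTop {a : ℝ} (ha : 0 < a) (K C : ℝ) :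
    Tendsto (fun x => x * K / (a * x - C) ^ 2) atTop (𝓝 0) := by
  have affine : Tendsto (fun x => a * x - C) atTop atTop :=
    tendsto_atTop_add_const_right _ (-C) (tendsto_id.const_mul_atTop ha)
  have inv : Tendsto (fun x => (a * x - C)⁻¹) atTop (𝓝 0) := tendsto_inv_atTop_zero.comp affine
  have expansion :
      Tendsto (fun x => K / a * ((a * x - C)⁻¹ + C * (a * x - C)⁻¹ ^ 2)) atTop (𝓝 0) := by
    simpa using (inv.add ((inv.pow 2).const_mul C)).const_mul (K / a)
  refine expansion.congr' ?_
  filter_upwards [affine.eventually_gt_atTop 0] with x hx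
  field_simp
  ring

lemma mul_sub_one_le_abs_sub_floor_mul {o w v t δ : ℝ} (hw : 0 < w) (hw₁ : w ≤ 1) (hv : 0 < v)
    (ht : 0 ≤ t) (h : δ < |o / (w * v) - t|) : δ * w * v - 1 ≤ |o - ⌊t * v⌋₊ * w| := by
  have floor_le : |(⌊t * v⌋₊ - t * v) * w| ≤ 1 := by
    rw [abs_mul, abs_of_pos hw]
    refine mul_le_one₀ (abs_le.2 ⟨?_, ?_⟩) hw.le hw₁
    · linarith [Nat.lt_floor_add_one (t * v)]
    · linarith [Nat.floor_le (mul_nonneg ht hv.le)]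
  have scaled : δ * w * v < |o - t * v * w| :=
    calc δ * w * v < |o / (w * v) - t| * (w * v) := by
          rw [mul_assoc]; gcongr
      _ = |o - t * v * w| := by
          rw [← abs_of_pos (mul_pos hw hv), ← abs_mul, abs_of_pos (mul_pos hw hv)]
          congr 1
          field_simp
  have split : o - t * v * w = (o - ⌊t * v⌋₊ * w) + (⌊t * v⌋₊ - t * v) * w := by ring
  linarith [split ▸ abs_add_le (o - ⌊t * v⌋₊ * w) ((⌊t * v⌋₊ - t * v) * w)]

variable {m : ℕ} {Ω : Type} {mΩ : MeasurableSpace Ω} {μ : Measure Ω} [IsProbabilityMeasure μ]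
  {ℱ : Filtration ℕ mΩ} {P : Matrix (Fin m) (Fin m) ℝ} {η : ℕ → Ω → Fin m} {b : ℝ} {L : ℕ}
  {π : Fin m → ℝ}

lemma IsStationaryDist.mem_stdSimplex (hπ : IsStationaryDist P π) : π ∈ stdSimplex ℝ (Fin m) :=
  ⟨hπ.1, hπ.2.1⟩

lemma IsStationaryDist.vecMul_eq (hπ : IsStationaryDist P π) : π ᵥ* P = π :=
  funext fun j => (hπ.2.2 j).symm

theorem IsMarkovChain.measureReal_le_abs_occup_sub_le (hη : IsMarkovChain ℱ μ P η)
    (hP : P ∈ rowStochastic ℝ (Fin m)) (hR : ReachesWithin P b L) (hb : 0 < b)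
    (hπ : IsStationaryDist P π) (i : Fin m) {s : ℝ} (hs : L / b < s) (n : ℕ) :
    μ.real {ω | ∃ k ≤ n, s ≤ |(occup η i k ω : ℝ) - k * π i|}
      ≤ n * (2 * (L / b)) ^ 2 / (s - L / b) ^ 2 := by
  have indicator_le : ∀ x, (Pi.single i 1 : Fin m → ℝ) x - π ⬝ᵥ Pi.single i 1 ≤ 1 := fun x => by
    rw [dotProduct_single_one, Pi.single_apply]
    split_ifs <;> linarith [hπ.1 i]
  simpa [occup, Pi.single_apply] using hη.measureReal_le_abs_sum_sub_le hP hR hb hπ.2.1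
    hπ.vecMul_eq zero_le_one indicator_le (by simpa using hs) n

theorem IsMarkovChain.measureReal_lt_abs_occup_div_sub_le (hη : IsMarkovChain ℱ μ P η)
    (hP : P ∈ rowStochastic ℝ (Fin m)) (hR : ReachesWithin P b L) (hb : 0 < b)
    (hπ : IsStationaryDist P π) (i : Fin m) {T δ v : ℝ} (hT : 0 ≤ T) (hδ : 0 ≤ δ) (hv : 0 < v)
    (hlarge : L / b < δ * (b / m) * v - 1) :
    μ.real {ω | ∃ t, 0 ≤ t ∧ t ≤ T ∧ δ < |(occup η i ⌊t * v⌋₊ ω : ℝ) / (π i * v) - t|}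
      ≤ v * (T * (2 * (L / b)) ^ 2) / (δ * (b / m) * v - (1 + L / b)) ^ 2 := by
  have hbπ : b / m ≤ π i := by simpa using hR.div_card_le hP hπ.mem_stdSimplex hπ.vecMul_eq i
  have hπ_pos : 0 < π i := (div_pos hb (Nat.cast_pos.2 i.pos)).trans_le hbπ
  have hπ_le : π i ≤ 1 :=
    (Finset.single_le_sum (fun j _ => hπ.1 j) (Finset.mem_univ i)).trans_eq hπ.2.1
  calc μ.real {ω | ∃ t, 0 ≤ t ∧ t ≤ T ∧ δ < |(occup η i ⌊t * v⌋₊ ω : ℝ) / (π i * v) - t|}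
      ≤ μ.real {ω | ∃ k ≤ ⌊T * v⌋₊, δ * (b / m) * v - 1 ≤ |(occup η i k ω : ℝ) - k * π i|} := by
        refine measureReal_mono ?_
        rintro ω ⟨t, ht₀, htT, ht⟩
        refine ⟨⌊t * v⌋₊, by gcongr, ?_⟩
        calc δ * (b / m) * v - 1 ≤ δ * π i * v - 1 := by gcongr
          _ ≤ _ := mul_sub_one_le_abs_sub_floor_mul hπ_pos hπ_le hv ht₀ ht
    _ ≤ ⌊T * v⌋₊ * (2 * (L / b)) ^ 2 / (δ * (b / m) * v - 1 - L / b) ^ 2 :=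
        hη.measureReal_le_abs_occup_sub_le hP hR hb hπ i hlarge _
    _ ≤ T * v * (2 * (L / b)) ^ 2 / (δ * (b / m) * v - 1 - L / b) ^ 2 := by
        gcongr
        exact Nat.floor_le (by positivity)
    _ = v * (T * (2 * (L / b)) ^ 2) / (δ * (b / m) * v - (1 + L / b)) ^ 2 := by ring

end OccupationTime

/-- Lemma 3: under condition B the normalized occupation-time processes
`μ_{ε,i}([t v_ε]) / (π_{ε,i} v_ε)` converge to the identity function `t`, uniformly on
compact intervals in probability. -/
theorem stmt10 {m : ℕ} (hm : 0 < m) (ε₀ : ℝ) (hε₀ : 0 < ε₀)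
    {Ω : Type} [MeasurableSpace Ω]
    (η : ℝ → ℕ → Ω → Fin m)
    (Pstart : ℝ → Fin m → Measure Ω)
    (hprob : ∀ ε i, IsProbabilityMeasure (Pstart ε i))
    (hmeas : ∀ ε n, Measurable (η ε n))
    (p : ℝ → Fin m → Fin m → ℝ)
    -- Markov chain structure with transition probabilities p_{ε,ij}
    (hMC : ∀ ε ∈ Ioc (0:ℝ) ε₀, ∀ n : ℕ, ∀ I : ℕ → Fin m,
      Pstart ε (I 0) {ω | ∀ k ≤ n, η ε k ω = I k}
        = ENNReal.ofReal (∏ k ∈ Finset.Icc 1 n, p ε (I (k - 1)) (I k)))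
    (hB : CondB p)
    (π : ℝ → Fin m → ℝ)
    (hπ : ∀ᶠ ε in 𝓝[>] (0:ℝ), IsStationaryDist (fun i j => p ε i j) (π ε))
    -- arbitrary family of initial distributions
    (q : ℝ → Fin m → ℝ) (Pq : ℝ → Measure Ω)
    (hq : ∀ ε ∈ Ioc (0:ℝ) ε₀, (∀ i, 0 ≤ q ε i) ∧ ∑ i, q ε i = 1)
    (hmix : ∀ ε ∈ Ioc (0:ℝ) ε₀, Pq ε = ∑ i, ENNReal.ofReal (q ε i) • Pstart ε i)
    (v : ℝ → ℝ) (hvpos : ∀ ε ∈ Ioc (0:ℝ) ε₀, 0 < v ε)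
    (hvinf : Tendsto v (𝓝[>] (0:ℝ)) atTop) :
    ∀ i : Fin m, ∀ T > (0:ℝ), ∀ δ > (0:ℝ),
      Tendsto
        (fun ε => (Pq ε {ω | ∃ t, 0 ≤ t ∧ t ≤ T ∧
          δ < |(occup (η ε) i (Nat.floor (t * v ε)) ω : ℝ) / (π ε i * v ε) - t|}).toReal)
        (𝓝[>] (0:ℝ)) (𝓝 0) := by
  intro i T hT δ hδ
  have hdom : ∀ᶠ ε in 𝓝[>] 0, ε ∈ Ioc 0 ε₀ := Ioc_mem_nhdsGT hε₀
  have hconn := hB.reflTransGen_asymptoticallyPos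
  have hstoch : ∀ᶠ ε in 𝓝[>] 0, p ε ∈ Matrix.rowStochastic ℝ (Fin m) := by
    filter_upwards [hdom, eventually_reflTransGen_pos hconn] with ε hε hpos
    have family : IsMarkovFamily (Pstart ε) (p ε) (η ε) := hMC ε hε
    exact family.mem_rowStochastic (hmeas ε) (family.nonneg hpos)
  obtain ⟨b, hb, L, hreach⟩ := exists_eventually_reachesWithin hstoch hconn
  have hrate : 0 < δ * (b / m) := mul_pos hδ (div_pos hb (Nat.cast_pos.2 hm))
  have hlarge := (hvinf.const_mul_atTop hrate).eventually_gt_atTop (L / b + 1)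
  refine squeeze_zero' (.of_forall fun _ => ENNReal.toReal_nonneg) ?_
    ((tendsto_mul_div_sq_sub_atTop hrate (T * (2 * (L / b)) ^ 2) (1 + L / b)).comp hvinf)
  filter_upwards [hdom, hstoch, hreach, hπ, hlarge] with ε hε hP hR hπ hlarge
  rw [hmix ε hε]
  have family : IsMarkovFamily (Pstart ε) (p ε) (η ε) := hMC ε hε
  have := isProbabilityMeasure_sum_ofReal_smul (law := Pstart ε) (hq ε hε)
  exact (family.isMarkovChain_sum_ofReal_smul (hmeas ε) hP.1 (hq ε hε))
    |>.measureReal_lt_abs_occup_div_sub_le hP hR hb hπ i hT.le hδ.le (hvpos ε hε)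
      (lt_sub_iff_add_lt.2 hlarge)
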